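/- arXiv:0707.2333 — 2 statements merged into one kernel-verified Lean document; each statement's English description precedes it below -/
import Mathlib

section
/- Under hypotheses (MP1),(MP2),(MP3) and s(n),t(n) = O(n): for any noncrossing pair partition p of {1,...,2k}, the set S_n^∧(p) := S_n(p) \ S_n^∨(p) has cardinality o(n^{k+1}), where S_n^∨(p) consists of pairs (φ,ψ) with φ constant on the blocks of p ∨ m and ψ constant on the blocks of p ∨ n. -/
/-- A partition (as a setoid) of `Fin N` is a pair partition if every block has two elements. -/
def IsPairPartition {N : ℕ} (p : Setoid (Fin N)) : Prop :=
  ∀ c ∈ p.classes, c.ncard = 2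

/-- A partition of `Fin N` is noncrossing if there are no `p1 < q1 < p2 < q2` with
`p1 ~ p2`, `q1 ~ q2` but `p1 ≁ q1`. -/
def IsNoncrossing {N : ℕ} (p : Setoid (Fin N)) : Prop :=
  ¬ ∃ p1 q1 p2 q2 : Fin N, p1 < q1 ∧ q1 < p2 ∧ p2 < q2 ∧
      p.r p1 p2 ∧ p.r q1 q2 ∧ ¬ p.r p1 q1

/-- The pair partition `{{1,2},{3,4},…,{2k-1,2k}}` (0-indexed: `{0,1},{2,3},…`). -/
def mSetoid (k : ℕ) : Setoid (Fin (2 * k)) :=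
  Setoid.ker (fun i => i.val / 2)

/-- The cyclic pair partition `{{2,3},{4,5},…,{2k,1}}` (0-indexed: `{1,2},{3,4},…,{2k-1,0}`). -/
def nSetoid (k : ℕ) : Setoid (Fin (2 * k)) :=
  Setoid.ker (fun i => ((i.val + 1) / 2) % k)

open Filter

/-!
Call a pair `i ~ j` of `p` *half-bad* for `(φ, ψ)` if exactly one of `φ i = φ j`, `ψ i = ψ j` holds.

If `φ` is not constant on `p ∨ m` or `ψ` is not constant on `p ∨ n`, then a half-bad pair exists:
choose a pair `i < j` at distance `j - i` minimal among those on which `φ` or `ψ` is not constant.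
As `p` is noncrossing, it pairs up the positions strictly between `i` and `j`, and both functions
are constant on these pairs. If `i` is even, `m` pairs up the positions from `i` to `j`, so every
value of `φ` is taken an even number of times on them, and on the positions strictly between them,
whence `φ i = φ j`. If `i` is odd, the same argument with `n` gives `ψ i = ψ j`.

Now fix a half-bad pair `i ~ j`. By (MP3) there are `o(n²)` choices for its labels. The remaining
labels are revealed one at a time, each next to a known one along `m` or `n`, so that one of its two
coordinates is known. The other has `O(n)` choices, and only `O(1)` by (MP2) if the `p`-partner is
known already. Only `k - 1` blocks of `p` remain, so the total is `o(n²) · O(n^(k-1))`.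
-/

theorem sum_eq_zero_of_existsUnique_partner {ι M : Type*} [Semiring M] [CharP M 2] {q : Setoid ι}
    {S : Finset ι} (hS : ∀ x ∈ S, ∃! y, y ∈ S ∧ y ≠ x ∧ q x y)
    {F : ι → M} (hF : ∀ x ∈ S, ∀ y ∈ S, q x y → F x = F y) : ∑ x ∈ S, F x = 0 := by
  choose partner hpartner huniq using hS
  refine Finset.sum_involution partner (fun x hx => ?_) (fun x hx _ => (hpartner x hx).2.1)
    (fun x hx => (hpartner x hx).1) fun x hx => ?_
  · obtain ⟨hmem, -, hq⟩ := hpartner x hx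
    rw [← hF x hx _ hmem hq, CharTwo.add_self_eq_zero]
  · obtain ⟨hmem, hne, hq⟩ := hpartner x hx
    exact (huniq _ hmem x ⟨hx, hne.symm, q.symm hq⟩).symm

theorem sum_Icc_eq_zero_of_consecutive_pairs {N : ℕ} {M : Type*} [Semiring M] [CharP M 2]
    {i j : Fin N} (hij : Odd (i.val + j.val)) {F : Fin N → M}
    (hF : ∀ x y : Fin N, (i.val + x) / 2 = (i.val + y) / 2 → F x = F y) :
    ∑ x ∈ Finset.Icc i j, F x = 0 := by
  refine sum_eq_zero_of_existsUnique_partner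
    (q := Setoid.ker fun x : Fin N => (i.val + x) / 2) (fun x hx => ?_) fun x _ y _ => hF x y
  obtain ⟨hix, hxj⟩ := Finset.mem_Icc.mp hx
  simp only [Finset.mem_Icc, Setoid.ker_def, Fin.le_def, ne_eq, Fin.ext_iff] at hix hxj ⊢
  rcases Nat.even_or_odd (i.val + x) with hparity | hparity
  · exact ⟨⟨x + 1, by grind⟩, by grind, by grind⟩
  · exact ⟨⟨x - 1, by grind⟩, by grind, by grind⟩

namespace IsPairPartition

variable {N : ℕ} {p : Setoid (Fin N)}

theorem existsUnique_partner (hpair : IsPairPartition p) (x : Fin N) : ∃! y, y ≠ x ∧ p x y := by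
  have hblock : {y | p y x}.ncard = 2 := hpair _ (p.mem_classes x)
  obtain ⟨u, v, huv, hblock_eq⟩ := Set.ncard_eq_two.mp hblock
  have hmem (y : Fin N) : p x y ↔ y = u ∨ y = v := by
    rw [p.comm', ← Set.mem_ofPred (p := (p · x)), hblock_eq, Set.mem_insert_iff,
      Set.mem_singleton_iff]
  rcases (hmem x).mp (p.refl' x) with rfl | rfl
  · exact ⟨v, by grind, by grind⟩
  · exact ⟨u, by grind, by grind⟩

theorem eq_or_eq (hpair : IsPairPartition p) {i j x : Fin N} (hij : i ≠ j) (hp : p i j)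
    (hx : p i x) : x = i ∨ x = j :=
  or_iff_not_imp_left.mpr fun hxi =>
    (hpair.existsUnique_partner i).unique ⟨hxi, hx⟩ ⟨hij.symm, hp⟩

theorem sum_eq_zero (hpair : IsPairPartition p) {M : Type*} [Semiring M] [CharP M 2]
    {S : Finset (Fin N)} (hS : ∀ x ∈ S, ∀ y, p x y → y ∈ S)
    {F : Fin N → M} (hF : ∀ x ∈ S, ∀ y, p x y → F x = F y) : ∑ x ∈ S, F x = 0 := by
  refine sum_eq_zero_of_existsUnique_partner (q := p) (fun x hx => ?_) fun x hx y _ => hF x hx y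
  obtain ⟨y, hy, huniq⟩ := hpair.existsUnique_partner x
  exact ⟨y, ⟨hS x hx y hy.2, hy⟩, fun z hz => huniq z hz.2⟩

theorem two_mul_card_quotient (hpair : IsPairPartition p) : 2 * Nat.card (Quotient p) = N := by
  have := Fintype.ofFinite p.classes
  have hsum := p.isPartition_classes.ncard_eq_finsum Set.univ
  simp only [finsum_eq_sum_of_fintype, Set.ncard_univ, Nat.card_fin, Set.univ_inter,
    hpair _ (Subtype.property _), Finset.sum_const, Finset.card_univ, smul_eq_mul] at hsum
  rw [Nat.card_congr p.quotientEquivClasses, Nat.card_eq_fintype_card, mul_comm, ← hsum]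

end IsPairPartition

namespace IsNoncrossing

variable {N : ℕ} {p : Setoid (Fin N)} {i j : Fin N}

theorem mem_Ioo_of_rel (hnc : IsNoncrossing p) (hpair : IsPairPartition p) (hp : p i j)
    {x y : Fin N} (hx : x ∈ Finset.Ioo i j) (hxy : p x y) : y ∈ Finset.Ioo i j := by
  obtain ⟨hix, hxj⟩ := Finset.mem_Ioo.mp hx
  have hxi : ¬ p i x := fun h =>
    (hpair.eq_or_eq (hix.trans hxj).ne hp h).elim hix.ne' hxj.ne
  have hyi : y ≠ i := fun h => hxi (h ▸ p.symm hxy)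
  have hyj : y ≠ j := fun h => hxi (p.trans hp (h ▸ p.symm hxy))
  rw [Finset.mem_Ioo]
  by_contra hy
  rcases lt_or_gt_of_ne hyi with hlt | hgt
  · exact hnc ⟨y, i, x, j, hlt, hix, hxj, p.symm hxy, hp, fun h => hxi (p.symm (p.trans hxy h))⟩
  · have hjy : j < y := lt_of_le_of_ne (not_lt.mp fun h => hy ⟨hgt, h⟩) hyj.symm
    exact hnc ⟨i, x, j, y, hix, hxj, hjy, hp, hxy, hxi⟩

theorem odd_add_of_rel (hnc : IsNoncrossing p) (hpair : IsPairPartition p) (hij : i < j)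
    (hp : p i j) : Odd (i.val + j.val) := by
  have hcard : ((Finset.Ioo i j).card : ZMod 2) = 0 := by
    simpa using hpair.sum_eq_zero (F := fun _ => (1 : ZMod 2))
      (fun x hx y => hnc.mem_Ioo_of_rel hpair hp hx) fun _ _ _ _ => rfl
  rw [ZMod.natCast_eq_zero_iff_even, Fin.card_Ioo] at hcard
  grind

theorem eq_of_forall_mem_Ioo (hnc : IsNoncrossing p) (hpair : IsPairPartition p) (hij : i < j)
    (hp : p i j) {α : Type*} {φ : Fin N → α}
    (hinside : ∀ x ∈ Finset.Ioo i j, ∀ y, p x y → φ x = φ y)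
    (hconsecutive : ∀ x y : Fin N, (i.val + x) / 2 = (i.val + y) / 2 → φ x = φ y) :
    φ i = φ j := by
  classical
  by_contra hne
  -- Each value of `φ` is taken an even number of times on `Icc i j` (pair up neighbours) and on
  -- `Ioo i j` (pair up along `p`), hence also on `{i, j}`.
  let F : Fin N → ZMod 2 := fun x => if φ x = φ i then 1 else 0
  have hIcc : ∑ x ∈ Finset.Icc i j, F x = 0 :=
    sum_Icc_eq_zero_of_consecutive_pairs (hnc.odd_add_of_rel hpair hij hp) fun x y h => by
      simp only [F, hconsecutive x y h]
  have hIoo : ∑ x ∈ Finset.Ioo i j, F x = 0 :=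
    hpair.sum_eq_zero (fun x hx y => hnc.mem_Ioo_of_rel hpair hp hx) fun x hx y h => by
      simp only [F, hinside x hx y h]
  rw [← Finset.Ico_insert_right hij.le, Finset.sum_insert Finset.right_notMem_Ico,
    ← Finset.Ioo_insert_left hij, Finset.sum_insert Finset.left_notMem_Ioo, hIoo] at hIcc
  simp [F, Ne.symm hne] at hIcc

end IsNoncrossing

theorem mSetoid_of_even {k : ℕ} {i x y : Fin (2 * k)} (hi : Even i.val)
    (h : (i.val + x) / 2 = (i.val + y) / 2) : mSetoid k x y := by
  change x.val / 2 = y.val / 2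
  grind

theorem nSetoid_of_odd {k : ℕ} {i x y : Fin (2 * k)} (hi : Odd i.val)
    (h : (i.val + x) / 2 = (i.val + y) / 2) : nSetoid k x y := by
  have hhalf : (x.val + 1) / 2 = (y.val + 1) / 2 := by grind
  exact congrArg (· % k) hhalf

theorem mSetoid_sup_nSetoid (k : ℕ) : mSetoid k ⊔ nSetoid k = ⊤ := by
  have hsucc (v : ℕ) (hv : v + 1 < 2 * k) :
      (mSetoid k ⊔ nSetoid k) ⟨v, by omega⟩ ⟨v + 1, hv⟩ := by
    rcases Nat.even_or_odd v with hparity | hparity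
    · exact le_sup_left (a := mSetoid k) (show v / 2 = (v + 1) / 2 by grind)
    · exact le_sup_right (b := nSetoid k)
        (congrArg (· % k) (show (v + 1) / 2 = (v + 1 + 1) / 2 by grind))
  have hzero (v : ℕ) (hv : v < 2 * k) : (mSetoid k ⊔ nSetoid k) ⟨0, by omega⟩ ⟨v, hv⟩ := by
    induction v with
    | zero => exact Setoid.refl' _ _
    | succ v ih => exact Setoid.trans' _ (ih (by omega)) (hsucc v hv)
  exact Setoid.eq_top_iff.mpr fun x y =>
    Setoid.trans' _ (Setoid.symm' _ (hzero x x.2)) (hzero y y.2)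

theorem IsNoncrossing.eq_or_eq_of_forall_mem_Ioo {k : ℕ} {p : Setoid (Fin (2 * k))}
    (hnc : IsNoncrossing p) (hpair : IsPairPartition p) {i j : Fin (2 * k)} (hij : i < j)
    (hp : p i j) {α β : Type*} {φ : Fin (2 * k) → α} {ψ : Fin (2 * k) → β}
    (hφ : mSetoid k ≤ Setoid.ker φ) (hψ : nSetoid k ≤ Setoid.ker ψ)
    (hinside : ∀ x ∈ Finset.Ioo i j, ∀ y, p x y → φ x = φ y ∧ ψ x = ψ y) :
    φ i = φ j ∨ ψ i = ψ j := by
  rcases Nat.even_or_odd i.val with hi | hi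
  · exact .inl <| hnc.eq_of_forall_mem_Ioo hpair hij hp (fun x hx y h => (hinside x hx y h).1)
      fun x y h => hφ (mSetoid_of_even hi h)
  · exact .inr <| hnc.eq_of_forall_mem_Ioo hpair hij hp (fun x hx y h => (hinside x hx y h).2)
      fun x y h => hψ (nSetoid_of_odd hi h)

theorem IsNoncrossing.exists_xor_eq {k : ℕ} {p : Setoid (Fin (2 * k))}
    (hnc : IsNoncrossing p) (hpair : IsPairPartition p)
    {α β : Type*} {φ : Fin (2 * k) → α} {ψ : Fin (2 * k) → β}
    (hφ : mSetoid k ≤ Setoid.ker φ) (hψ : nSetoid k ≤ Setoid.ker ψ)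
    (hp : ¬ (p ≤ Setoid.ker φ ∧ p ≤ Setoid.ker ψ)) :
    ∃ i j, p i j ∧ Xor (φ i = φ j) (ψ i = ψ j) := by
  by_contra! hxor
  have hlt (i j : Fin (2 * k)) (hij : i < j) (hp : p i j) : φ i = φ j ∧ ψ i = ψ j := by
    induction hd : j.val - i.val using Nat.strong_induction_on generalizing i j with
    | _ d ih =>
      have hinside : ∀ x ∈ Finset.Ioo i j, ∀ y, p x y → φ x = φ y ∧ ψ x = ψ y := by
        intro x hx y hxy
        have hy := hnc.mem_Ioo_of_rel hpair hp hx hxy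
        simp only [Finset.mem_Ioo, Fin.lt_def] at hx hy
        rcases lt_trichotomy x y with h | rfl | h
        · exact ih (y - x) (by omega) x y h hxy rfl
        · exact ⟨rfl, rfl⟩
        · exact (ih (x - y) (by omega) y x h (p.symm hxy) rfl).imp Eq.symm Eq.symm
      have heither := hnc.eq_or_eq_of_forall_mem_Ioo hpair hij hp hφ hψ hinside
      grind [Xor]
  have hall (i j : Fin (2 * k)) (hp : p i j) : φ i = φ j ∧ ψ i = ψ j := by
    rcases lt_trichotomy i j with h | rfl | h
    · exact hlt i j h hp
    · exact ⟨rfl, rfl⟩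
    · exact (hlt j i h (p.symm hp)).imp Eq.symm Eq.symm
  exact hp ⟨fun i j hij => (hall i j hij).1, fun i j hij => (hall i j hij).2⟩

open Classical in
theorem ncard_le_mul_ncard_image {γ δ : Type*} {A : Set γ} (hA : A.Finite) (f : γ → δ) {c : ℕ}
    (hc : ∀ b ∈ f '' A, {a ∈ A | f a = b}.ncard ≤ c) : A.ncard ≤ c * (f '' A).ncard := by
  lift A to Finset γ using hA
  rw [← Finset.coe_image, Set.ncard_coe_finset, Set.ncard_coe_finset]
  refine Finset.card_le_mul_card_image A c fun b hb => ?_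
  rw [← Set.ncard_coe_finset, Finset.coe_filter]
  exact hc b (by simpa using hb)

section Restrict

variable {ι γ : Type*} [DecidableEq ι] [Finite γ]

theorem ncard_restrict_insert_le {X : Set (ι → γ)} {S : Finset ι} {e : ι} {c : ℕ}
    (hc : ∀ x ∈ X, (Function.eval e '' {y ∈ X | Set.EqOn y x S}).ncard ≤ c) :
    ((insert e S).restrict '' X).ncard ≤ c * (S.restrict '' X).ncard := by
  have himage : Finset.restrict₂ (Finset.subset_insert e S) '' ((insert e S).restrict '' X) =
      S.restrict '' X := by
    rw [← Set.image_comp, Finset.restrict₂_comp_restrict]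
  rw [← himage]
  refine ncard_le_mul_ncard_image (Set.toFinite _) _ ?_
  rw [himage]
  rintro _ ⟨x, hx, rfl⟩
  refine (Set.ncard_le_ncard_of_injOn (fun z => z ⟨e, Finset.mem_insert_self e S⟩) ?_ ?_).trans
    (hc x hx)
  · rintro _ ⟨⟨y, hy, rfl⟩, hyx⟩
    exact ⟨y, ⟨hy, fun i hi => congrFun hyx ⟨i, hi⟩⟩, rfl⟩
  · rintro z ⟨-, hz⟩ z' ⟨-, hz'⟩ he
    funext ⟨i, hi⟩
    rcases Finset.mem_insert.mp hi with rfl | hiS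
    · exact he
    · exact congrFun (hz.trans hz'.symm) ⟨i, hiS⟩

theorem ncard_restrict_pair_le (X : Set (ι → γ)) (i j : ι) :
    (({i, j} : Finset ι).restrict '' X).ncard ≤ ((fun x => (x i, x j)) '' X).ncard := by
  refine Set.ncard_le_ncard_of_injOn
    (fun z => (z ⟨i, by simp⟩, z ⟨j, by simp⟩)) ?_ ?_
  · rintro _ ⟨x, hx, rfl⟩
    exact ⟨x, hx, rfl⟩
  · intro z _ z' _ h
    obtain ⟨hi, hj⟩ := Prod.ext_iff.mp h
    funext ⟨e, he⟩
    rcases Finset.mem_insert.mp he with rfl | he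
    · exact hi
    · obtain rfl := Finset.mem_singleton.mp he
      exact hj

end Restrict

theorem exists_rel_of_sup_eq_top {ι : Type*} {m n : Setoid ι} (hmn : m ⊔ n = ⊤) {S : Set ι}
    (hS : S.Nonempty) (hS' : S ≠ Set.univ) : ∃ a ∈ S, ∃ e ∉ S, m a e ∨ n a e := by
  by_contra! hclosed
  have hle : m ⊔ n ≤ Setoid.ker (· ∈ S) := by
    refine sup_le (fun a e h => ?_) fun a e h => ?_ <;> rw [Setoid.ker_def, eq_iff_iff]
    · exact ⟨fun ha => by_contra fun he => (hclosed a ha e he).1 h,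
        fun he => by_contra fun ha => (hclosed e he a ha).1 (m.symm h)⟩
    · exact ⟨fun ha => by_contra fun he => (hclosed a ha e he).2 h,
        fun he => by_contra fun ha => (hclosed e he a ha).2 (n.symm h)⟩
  obtain ⟨a, ha⟩ := hS
  rw [hmn] at hle
  exact hS' (Set.eq_univ_of_forall fun e => (hle (show (⊤ : Setoid ι) a e from trivial)).mp ha)

/-- The number of blocks of `p` that meet `S`. -/
noncomputable def numBlocks {ι : Type*} (p : Setoid ι) (S : Finset ι) : ℕ :=
  (Quotient.mk p '' S).ncard

section NumBlocks

variable {ι : Type*} {p : Setoid ι}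

theorem numBlocks_univ [Fintype ι] : numBlocks p Finset.univ = Nat.card (Quotient p) := by
  rw [numBlocks, Finset.coe_univ, Set.image_univ_of_surjective Quotient.mk_surjective,
    Set.ncard_univ]

variable [DecidableEq ι] {S : Finset ι} {e f : ι}

theorem numBlocks_insert_of_rel (hf : f ∈ S) (hfe : p f e) :
    numBlocks p (insert e S) = numBlocks p S := by
  rw [numBlocks, Finset.coe_insert, Set.image_insert_eq, Set.insert_eq_of_mem, numBlocks]
  exact ⟨f, hf, Quotient.sound hfe⟩

theorem numBlocks_insert_of_forall_not_rel (h : ∀ f ∈ S, ¬ p f e) :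
    numBlocks p (insert e S) = numBlocks p S + 1 := by
  rw [numBlocks, Finset.coe_insert, Set.image_insert_eq, Set.ncard_insert_of_notMem, numBlocks]
  rintro ⟨f, hf, hfe⟩
  exact h f hf (Quotient.exact hfe)

theorem numBlocks_pair (hfe : p f e) : numBlocks p {f, e} = 1 := by
  rw [Finset.pair_comm, numBlocks_insert_of_rel (Finset.mem_singleton_self f) hfe, numBlocks,
    Finset.coe_singleton, Set.image_singleton, Set.ncard_singleton]

end NumBlocks

/-- Functions in `X` can be revealed point by point: moving along `m` or `n` leaves at most `D * N`
candidates for the next value, and at most `D` if a value in the same block of `p` is known. -/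
structure IsRevealable {ι γ : Type*} (m n p : Setoid ι) (D N : ℕ) (X : Set (ι → γ)) : Prop where
  ncard_eval_le : ∀ x ∈ X, ∀ a e, m a e ∨ n a e →
    (Function.eval e '' {y ∈ X | y a = x a}).ncard ≤ D * N
  ncard_eval_le_of_rel : ∀ x ∈ X, ∀ a e f, m a e ∨ n a e → p f e →
    (Function.eval e '' {y ∈ X | y a = x a ∧ y f = x f}).ncard ≤ D

namespace IsRevealable

variable {ι γ : Type*} [Finite γ] {m n p : Setoid ι} {D N : ℕ} {X : Set (ι → γ)}

theorem exists_ncard_restrict_insert_le [DecidableEq ι] (hX : IsRevealable m n p D N X)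
    {S : Finset ι} {a e : ι} (ha : a ∈ S) (hae : m a e ∨ n a e) :
    ∃ d, numBlocks p (insert e S) = numBlocks p S + d ∧
      ((insert e S).restrict '' X).ncard ≤ D * N ^ d * (S.restrict '' X).ncard := by
  by_cases hmet : ∃ f ∈ S, p f e
  · obtain ⟨f, hf, hfe⟩ := hmet
    refine ⟨0, numBlocks_insert_of_rel hf hfe, ncard_restrict_insert_le fun x hx => ?_⟩
    rw [pow_zero, mul_one]
    refine le_trans (Set.ncard_le_ncard ?_) (hX.ncard_eval_le_of_rel x hx a e f hae hfe)
    exact Set.image_mono fun y hy => ⟨hy.1, hy.2 ha, hy.2 hf⟩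
  · push Not at hmet
    refine ⟨1, numBlocks_insert_of_forall_not_rel hmet, ncard_restrict_insert_le fun x hx => ?_⟩
    rw [pow_one]
    refine le_trans (Set.ncard_le_ncard ?_) (hX.ncard_eval_le x hx a e hae)
    exact Set.image_mono fun y hy => ⟨hy.1, hy.2 ha⟩

theorem ncard_mul_le [Finite ι] (hX : IsRevealable m n p D N X) (hmn : m ⊔ n = ⊤) (hD : 0 < D)
    {i j : ι} (hij : p i j) :
    X.ncard * N ≤
      ((fun x => (x i, x j)) '' X).ncard * D ^ Nat.card ι * N ^ Nat.card (Quotient p) := by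
  classical
  have := Fintype.ofFinite ι
  set T := ((fun x => (x i, x j)) '' X).ncard
  let Bounded (S : Finset ι) : Prop :=
    (S.restrict '' X).ncard * N ≤ T * D ^ S.card * N ^ numBlocks p S
  have hstart : Bounded {i, j} := by
    simp only [Bounded, numBlocks_pair hij, pow_one]
    gcongr
    exact (ncard_restrict_pair_le X i j).trans (Nat.le_mul_of_pos_right T (pow_pos hD _))
  obtain ⟨S, hS, hmax⟩ := Finite.exists_le_maximal hstart
  have huniv : S = Finset.univ := by
    by_contra hne
    obtain ⟨a, ha, e, he, hae⟩ := exists_rel_of_sup_eq_top hmn (S := S)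
      ⟨i, hS (Finset.mem_insert_self i _)⟩ (by rwa [Ne, Finset.coe_eq_univ])
    obtain ⟨d, hd, hle⟩ := hX.exists_ncard_restrict_insert_le ha hae
    refine he (hmax.le_of_ge (y := insert e S) ?_ (Finset.subset_insert e S)
      (Finset.mem_insert_self e S))
    calc ((insert e S).restrict '' X).ncard * N
        ≤ D * N ^ d * (S.restrict '' X).ncard * N := by gcongr
      _ = D * N ^ d * ((S.restrict '' X).ncard * N) := by ring
      _ ≤ D * N ^ d * (T * D ^ S.card * N ^ numBlocks p S) := Nat.mul_le_mul_left _ hmax.prop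
      _ = T * D ^ (insert e S).card * N ^ numBlocks p (insert e S) := by
        rw [hd, Finset.card_insert_of_notMem he]
        ring
  have hinj : Function.Injective (Finset.univ.restrict : (ι → γ) → _) :=
    fun x y h => funext fun e => congrFun h ⟨e, Finset.mem_univ e⟩
  have hbound : Bounded Finset.univ := huniv ▸ hmax.prop
  rwa [← Set.ncard_image_of_injective X hinj, Nat.card_eq_fintype_card, ← Finset.card_univ,
    ← numBlocks_univ]

end IsRevealable

section Labelings

variable {ι α β : Type*}

theorem ncard_le_of_subset_singleton_prod [Finite β] {Y : Set (α × β)} {a : α} {T : Set β}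
    (hY : Y ⊆ {a} ×ˢ T) : Y.ncard ≤ T.ncard := by
  simpa [Set.ncard_prod] using Set.ncard_le_ncard hY

theorem ncard_le_of_subset_prod_singleton [Finite α] {Y : Set (α × β)} {T : Set α} {b : β}
    (hY : Y ⊆ T ×ˢ {b}) : Y.ncard ≤ T.ncard := by
  simpa [Set.ncard_prod] using Set.ncard_le_ncard hY

/-- A labeling of `ι` by `α × β` whose first coordinate is constant on the blocks of `m`, whose
second coordinate is constant on the blocks of `n`, and which sends `p`-related indices to
`R`-related labels. The elements of `S_n(p)` are of this form, with `(φ, ψ)` encoded as one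
function; unlike there, `R`-related labels may also occur at indices that are not `p`-related. -/
structure IsLabeling (m n p : Setoid ι) (R : α × β → α × β → Prop) (g : ι → α × β) : Prop where
  fst_eq : ∀ a e, m a e → (g a).1 = (g e).1
  snd_eq : ∀ a e, n a e → (g a).2 = (g e).2
  rel : ∀ a e, p a e → R (g a) (g e)

variable (R : α × β → α × β → Prop)

/-- Pairs of distinct `R`-related labels with the same first coordinate, counted by (MP3). -/
def fstCollisions : Set (α × β × β) :=
  {x | x.2.1 ≠ x.2.2 ∧ R (x.1, x.2.1) (x.1, x.2.2)}

/-- Pairs of distinct `R`-related labels with the same second coordinate, counted by (MP3). -/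
def sndCollisions : Set (α × α × β) :=
  {x | x.1 ≠ x.2.1 ∧ R (x.1, x.2.2) (x.2.1, x.2.2)}

variable [Finite α] [Finite β]

theorem ncard_xor_eq_le :
    {w : (α × β) × (α × β) | R w.1 w.2 ∧ Xor (w.1.1 = w.2.1) (w.1.2 = w.2.2)}.ncard ≤
      (fstCollisions R).ncard + (sndCollisions R).ncard := by
  let pairOfFst : α × β × β → (α × β) × (α × β) := fun x => ((x.1, x.2.1), (x.1, x.2.2))
  let pairOfSnd : α × α × β → (α × β) × (α × β) := fun x => ((x.1, x.2.2), (x.2.1, x.2.2))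
  calc _ ≤ (pairOfFst '' fstCollisions R ∪ pairOfSnd '' sndCollisions R).ncard := by
        refine Set.ncard_le_ncard ?_
        rintro ⟨⟨a, b⟩, a', b'⟩ ⟨hR, hxor⟩
        obtain ⟨rfl : a = a', hb⟩ | ⟨rfl : b = b', ha⟩ := hxor
        · exact .inl ⟨(a, b, b'), ⟨hb, hR⟩, rfl⟩
        · exact .inr ⟨(a, a', b), ⟨ha, hR⟩, rfl⟩
    _ ≤ _ := (Set.ncard_union_le _ _).trans
        (add_le_add (Set.ncard_image_le (Set.toFinite _)) (Set.ncard_image_le (Set.toFinite _)))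

variable {R} {m n p : Setoid ι} {D N : ℕ}

theorem IsLabeling.isRevealable {X : Set (ι → α × β)} (hX : ∀ g ∈ X, IsLabeling m n p R g)
    (hα : Nat.card α ≤ D * N) (hβ : Nat.card β ≤ D * N)
    (hRβ : ∀ u a, {b | R u (a, b)}.ncard ≤ D) (hRα : ∀ u b, {a | R u (a, b)}.ncard ≤ D) :
    IsRevealable m n p D N X where
  ncard_eval_le x _ a e hae := by
    rcases hae with hm | hn
    · refine (ncard_le_of_subset_singleton_prod (a := (x a).1) (T := Set.univ) ?_).trans
        (by rwa [Set.ncard_univ])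
      rintro _ ⟨y, ⟨hy, hya⟩, rfl⟩
      exact ⟨hya ▸ ((hX y hy).fst_eq a e hm).symm, trivial⟩
    · refine (ncard_le_of_subset_prod_singleton (b := (x a).2) (T := Set.univ) ?_).trans
        (by rwa [Set.ncard_univ])
      rintro _ ⟨y, ⟨hy, hya⟩, rfl⟩
      exact ⟨trivial, hya ▸ ((hX y hy).snd_eq a e hn).symm⟩
  ncard_eval_le_of_rel x _ a e f hae hfe := by
    rcases hae with hm | hn
    · refine (ncard_le_of_subset_singleton_prod (a := (x a).1) ?_).trans (hRβ (x f) (x a).1)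
      rintro _ ⟨y, ⟨hy, hya, hyf⟩, rfl⟩
      rw [← hya, ← hyf, (hX y hy).fst_eq a e hm]
      exact ⟨rfl, (hX y hy).rel f e hfe⟩
    · refine (ncard_le_of_subset_prod_singleton (b := (x a).2) ?_).trans (hRα (x f) (x a).2)
      rintro _ ⟨y, ⟨hy, hya, hyf⟩, rfl⟩
      rw [← hya, ← hyf, (hX y hy).snd_eq a e hn]
      exact ⟨(hX y hy).rel f e hfe, rfl⟩

theorem ncard_isLabeling_xor_mul_le [Finite ι] (hmn : m ⊔ n = ⊤) (hD : 0 < D)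
    (hα : Nat.card α ≤ D * N) (hβ : Nat.card β ≤ D * N)
    (hRβ : ∀ u a, {b | R u (a, b)}.ncard ≤ D) (hRα : ∀ u b, {a | R u (a, b)}.ncard ≤ D)
    {i j : ι} (hij : p i j) :
    {g | IsLabeling m n p R g ∧ Xor ((g i).1 = (g j).1) ((g i).2 = (g j).2)}.ncard * N ≤
      ((fstCollisions R).ncard + (sndCollisions R).ncard) * D ^ Nat.card ι *
        N ^ Nat.card (Quotient p) := by
  refine ((IsLabeling.isRevealable (fun g hg => hg.1) hα hβ hRβ hRα).ncard_mul_le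
    hmn hD hij).trans ?_
  gcongr
  refine (Set.ncard_le_ncard ?_).trans (ncard_xor_eq_le R)
  rintro _ ⟨g, ⟨hg, hxor⟩, rfl⟩
  exact ⟨hg.rel i j hij, hxor⟩

theorem IsNoncrossing.ncard_isLabeling_mul_le {k : ℕ} {p : Setoid (Fin (2 * k))}
    (hnc : IsNoncrossing p) (hpair : IsPairPartition p) (hD : 0 < D)
    (hα : Nat.card α ≤ D * N) (hβ : Nat.card β ≤ D * N)
    (hRβ : ∀ u a, {b | R u (a, b)}.ncard ≤ D) (hRα : ∀ u b, {a | R u (a, b)}.ncard ≤ D) :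
    {g | IsLabeling (mSetoid k) (nSetoid k) p R g ∧ ¬ p ≤ Setoid.ker g}.ncard * N ≤
      (2 * k) ^ 2 * D ^ (2 * k) * ((fstCollisions R).ncard + (sndCollisions R).ncard) * N ^ k := by
  let X (w : Fin (2 * k) × Fin (2 * k)) : Set (Fin (2 * k) → α × β) :=
    {g | p w.1 w.2 ∧ IsLabeling (mSetoid k) (nSetoid k) p R g ∧
      Xor ((g w.1).1 = (g w.2).1) ((g w.1).2 = (g w.2).2)}
  set T := (fstCollisions R).ncard + (sndCollisions R).ncard
  have hcover : {g | IsLabeling (mSetoid k) (nSetoid k) p R g ∧ ¬ p ≤ Setoid.ker g} ⊆ ⋃ w, X w := by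
    rintro g ⟨hg, hker⟩
    obtain ⟨i, j, hij, hxor⟩ := hnc.exists_xor_eq hpair (φ := fun e => (g e).1)
      (ψ := fun e => (g e).2) hg.fst_eq hg.snd_eq
      fun h => hker fun a e hae => Prod.ext (h.1 hae) (h.2 hae)
    exact Set.mem_iUnion.mpr ⟨(i, j), hij, hg, hxor⟩
  have hX (w) : (X w).ncard * N ≤ T * D ^ (2 * k) * N ^ k := by
    by_cases hw : p w.1 w.2
    · have hblocks : Nat.card (Quotient p) = k := by have := hpair.two_mul_card_quotient; omega
      simpa [X, hw, hblocks] using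
        ncard_isLabeling_xor_mul_le (mSetoid_sup_nSetoid k) hD hα hβ hRβ hRα hw
    · simp [X, hw]
  calc _ ≤ (∑ w, (X w).ncard) * N := by
        gcongr
        exact (Set.ncard_le_ncard hcover).trans (Set.ncard_iUnion_le_of_fintype X)
    _ = ∑ w, (X w).ncard * N := Finset.sum_mul ..
    _ ≤ ∑ _w : Fin (2 * k) × Fin (2 * k), T * D ^ (2 * k) * N ^ k :=
        Finset.sum_le_sum fun w _ => hX w
    _ = (2 * k) ^ 2 * D ^ (2 * k) * T * N ^ k := by
        simp only [Finset.sum_const, Finset.card_univ, Fintype.card_prod, Fintype.card_fin,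
          smul_eq_mul]
        ring

end Labelings

theorem tendsto_div_pow_succ_of_mul_le {f g : ℕ → ℕ} {K k : ℕ}
    (hfg : ∀ n, f n * n ≤ K * g n * n ^ k)
    (hg : Tendsto (fun n => (g n : ℝ) / (n : ℝ) ^ 2) atTop (nhds 0)) :
    Tendsto (fun n => (f n : ℝ) / (n : ℝ) ^ (k + 1)) atTop (nhds 0) := by
  refine squeeze_zero' (.of_forall fun n => by positivity) ?_
    (by simpa using hg.const_mul (K : ℝ))
  filter_upwards [eventually_gt_atTop 0] with n hn
  have hn' : (0 : ℝ) < n := by exact_mod_cast hn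
  have hcast : (f n : ℝ) * n ≤ K * g n * n ^ k := by exact_mod_cast hfg n
  rw [div_le_iff₀ (by positivity), ← mul_le_mul_iff_left₀ hn']
  refine hcast.trans_eq ?_
  field_simp
  ring

theorem sWedge_count_small_general (k : ℕ) {α β : ℕ → Type*} [∀ n, Finite (α n)]
    [∀ n, Finite (β n)] (R : ∀ n, α n × β n → α n × β n → Prop)
    (C : ℕ) (hα : ∀ n, Nat.card (α n) ≤ C * n) (hβ : ∀ n, Nat.card (β n) ≤ C * n)
    (B : ℕ) (hMP2 : ∀ n a b a', {b' | R n (a, b) (a', b')}.ncard ≤ B)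
    (hMP2' : ∀ n a b b', {a' | R n (a, b) (a', b')}.ncard ≤ B)
    (hMP3 : Tendsto (fun n => ((fstCollisions (R n)).ncard : ℝ) / (n : ℝ) ^ 2) atTop (nhds 0))
    (hMP3' : Tendsto (fun n => ((sndCollisions (R n)).ncard : ℝ) / (n : ℝ) ^ 2) atTop (nhds 0))
    (p : Setoid (Fin (2 * k))) (hpair : IsPairPartition p) (hnc : IsNoncrossing p) :
    Tendsto (fun n =>
      ({fp : (Fin (2 * k) → α n) × (Fin (2 * k) → β n) |
          ((∀ i j, mSetoid k i j → fp.1 i = fp.1 j) ∧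
           (∀ i j, nSetoid k i j → fp.2 i = fp.2 j) ∧
           (∀ i j, p i j → R n (fp.1 i, fp.2 i) (fp.1 j, fp.2 j))) ∧
          ¬ ((∀ i j, (p ⊔ mSetoid k) i j → fp.1 i = fp.1 j) ∧
             (∀ i j, (p ⊔ nSetoid k) i j → fp.2 i = fp.2 j))}.ncard : ℝ)
        / (n : ℝ) ^ (k + 1)) atTop (nhds 0) := by
  have hcount (n : ℕ) := hnc.ncard_isLabeling_mul_le hpair (R := R n) (D := B + C + 1) (N := n)
    (by omega) ((hα n).trans (by gcongr; omega)) ((hβ n).trans (by gcongr; omega))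
    (fun u a => (hMP2 n u.1 u.2 a).trans (by omega))
    (fun u b => (hMP2' n u.1 u.2 b).trans (by omega))
  refine tendsto_div_pow_succ_of_mul_le (fun n => le_trans ?_ (hcount n))
    (by simpa [add_div] using hMP3.add hMP3')
  refine Nat.mul_le_mul_right n (Set.ncard_le_ncard_of_injOn (fun fp e => (fp.1 e, fp.2 e)) ?_ ?_)
  · rintro ⟨φ, ψ⟩ ⟨⟨hm, hn, hR⟩, hjoin⟩
    refine ⟨⟨hm, hn, hR⟩, fun hker => hjoin ⟨fun i j h => ?_, fun i j h => ?_⟩⟩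
    · exact sup_le (c := Setoid.ker φ) (fun a e hae => congrArg Prod.fst (hker hae)) hm h
    · exact sup_le (c := Setoid.ker ψ) (fun a e hae => congrArg Prod.snd (hker hae)) hn h
  · exact (Equiv.arrowProdEquivProdArrow _ _ _).symm.injective.injOn

/-- For a noncrossing pair partition `p` of `{1,…,2k}`, under (MP1), (MP2), (MP3) and
`s(n), t(n) = O(n)`, the set `S_n^∧(p) = S_n(p) \ S_n^∨(p)` has cardinality
`o(n^{k+1})`, where `S_n^∨(p)` consists of those `(φ,ψ) ∈ S_n(p)` with `φ` constant on
the blocks of `p ∨ m` and `ψ` constant on the blocks of `p ∨ n`. -/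
theorem sWedge_count_small (k : ℕ) (hk : 1 ≤ k)
    (s t : ℕ → ℕ) (R : ∀ n, Setoid (Fin (s n) × Fin (t n)))
    (C : ℕ) (hsC : ∀ n, s n ≤ C * n) (htC : ∀ n, t n ≤ C * n)
    -- (MP1)
    (hMP1 : Tendsto (fun n =>
        ((Finset.univ.sup (fun a : Fin (s n) =>
            {x : Fin (t n) × Fin (s n) × Fin (t n) |
              (R n).r (a, x.1) (x.2.1, x.2.2)}.ncard) : ℕ) : ℝ) / (n : ℝ) ^ 2)
        atTop (nhds 0))
    -- (MP2)
    (B : ℕ)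
    (hMP2 : ∀ n (a : Fin (s n)) (q : Fin (t n)) (a' : Fin (s n)),
        {q' : Fin (t n) | (R n).r (a, q) (a', q')}.ncard ≤ B)
    (hMP2' : ∀ n (a : Fin (s n)) (q q' : Fin (t n)),
        {a' : Fin (s n) | (R n).r (a, q) (a', q')}.ncard ≤ B)
    -- (MP3)
    (hMP3 : Tendsto (fun n =>
        ({x : Fin (s n) × Fin (t n) × Fin (t n) |
            x.2.1 ≠ x.2.2 ∧ (R n).r (x.1, x.2.1) (x.1, x.2.2)}.ncard : ℝ) / (n : ℝ) ^ 2)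
        atTop (nhds 0))
    (hMP3' : Tendsto (fun n =>
        ({x : Fin (s n) × Fin (s n) × Fin (t n) |
            x.1 ≠ x.2.1 ∧ (R n).r (x.1, x.2.2) (x.2.1, x.2.2)}.ncard : ℝ) / (n : ℝ) ^ 2)
        atTop (nhds 0))
    (p : Setoid (Fin (2 * k))) (hpair : IsPairPartition p) (hnc : IsNoncrossing p) :
    Tendsto (fun n =>
      ({fp : (Fin (2 * k) → Fin (s n)) × (Fin (2 * k) → Fin (t n)) |
          ((∀ i j, (mSetoid k).r i j → fp.1 i = fp.1 j) ∧
           (∀ i j, (nSetoid k).r i j → fp.2 i = fp.2 j) ∧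
           (∀ i j, ((R n).r (fp.1 i, fp.2 i) (fp.1 j, fp.2 j) ↔ p.r i j))) ∧
          ¬ ((∀ i j, (p ⊔ mSetoid k).r i j → fp.1 i = fp.1 j) ∧
             (∀ i j, (p ⊔ nSetoid k).r i j → fp.2 i = fp.2 j))}.ncard : ℝ)
        / (n : ℝ) ^ (k + 1)) atTop (nhds 0) := by
  refine squeeze_zero (fun n => by positivity) (fun n => ?_)
    (sWedge_count_small_general k (fun n => (R n).r) C (by simpa using hsC) (by simpa using htC)
      B hMP2 hMP2' hMP3 hMP3' p hpair hnc)
  exact div_le_div_of_nonneg_right (Nat.cast_le.mpr <| Set.ncard_le_ncard fun _ h =>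
    ⟨⟨h.1.1, h.1.2.1, fun i j => (h.1.2.2 i j).mpr⟩, h.2⟩) (by positivity)
end

section
/- Let (m_k) be defined by m_k = ∑_{i=1}^{k} #NC^{(i)}(k)·κ^i for κ > 0. Then m_k is the k-th moment of the Marčenko–Pastur distribution max{0, 1−κ}·δ_0 + (√(4κ − (x−1−κ)²)/(2πx))·1_{[(1−√κ)², (1+√κ)²]}(x) dx. -/
open MeasureTheory

/-- The Marčenko–Pastur distribution with parameter `κ > 0`:
`max{0, 1-κ}·δ₀ + (√(4κ - (x-1-κ)²)/(2πx))·1_{[(1-√κ)², (1+√κ)²]}(x) dx`. -/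
noncomputable def mpMeasure (κ : ℝ) : Measure ℝ :=
  ENNReal.ofReal (max 0 (1 - κ)) • Measure.dirac 0 +
    volume.withDensity (fun x =>
      ENNReal.ofReal (Set.indicator
        (Set.Icc ((1 - Real.sqrt κ) ^ 2) ((1 + Real.sqrt κ) ^ 2))
        (fun y => Real.sqrt (4 * κ - (y - 1 - κ) ^ 2) / (2 * Real.pi * y)) x))

/-!
Let `m` be the smallest element of the block of the last point of a noncrossing partition. No block
meets both `{0, …, m - 1}` and its complement, and in the partition of the complement the first and
the last point are related; such a partition is determined by deleting its last point, unless it is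
a single point. Hence the generating function satisfies `M = 1 + X M (M - 1 + κ)`, so
`S = 2 X M + (κ - 1) X - 1` squares to `1 - 2 (1 + κ) X + (1 - κ) ^ 2 X ^ 2`. Differentiating this
identity gives a first-order linear differential equation for `S`, i.e. a three-term recurrence for
the coefficients of `M`.

On the other side, `x` times the Marčenko–Pastur density is a multiple of the semicircle density of
centre `1 + κ` and radius `2 √κ`, and integrating the derivative of
`x ^ j (r ^ 2 - (x - c) ^ 2) ^ (3 / 2)` over the support shows that the semicircle moments satisfy
the same recurrence.
-/

section Combinatorics

open Finset

section Setoid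

variable {α β : Type*}

lemma ncard_classes_ker_of_surjective {f : α → β} (hf : Function.Surjective f) :
    (Setoid.ker f).classes.ncard = Nat.card β := by
  rw [← Nat.card_coe_set_eq]
  exact Nat.card_congr <|
    (Setoid.quotientEquivClasses _).symm.trans (Setoid.quotientKerEquivOfSurjective f hf)

lemma ncard_classes_eq_card_quotient (p : Setoid α) :
    p.classes.ncard = Nat.card (Quotient p) := by
  conv_lhs => rw [← Setoid.ker_mk_eq p]
  exact ncard_classes_ker_of_surjective Quotient.mk''_surjective

lemma ncard_classes_comap_of_surjective {f : α → β} (hf : Function.Surjective f) (p : Setoid β) :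
    (p.comap f).classes.ncard = p.classes.ncard := by
  rw [Setoid.comap_eq, ncard_classes_ker_of_surjective (Quotient.mk''_surjective.comp hf),
    ncard_classes_eq_card_quotient]

lemma ncard_classes_mem_Icc [Finite α] [Nonempty α] (p : Setoid α) :
    p.classes.ncard ∈ Icc 1 (Nat.card α) := by
  have : Nonempty (Quotient p) := (nonempty_quotient_iff p).2 ‹_›
  rw [ncard_classes_eq_card_quotient, mem_Icc]
  exact ⟨Nat.card_pos, Nat.card_le_card_of_surjective _ Quotient.mk_surjective⟩

instance finite_setoid [Finite α] : Finite (Setoid α) :=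
  Finite.of_injective (fun p : Setoid α => ⇑p) fun _ _ h =>
    Setoid.ext fun x y => iff_of_eq (congr_fun₂ h x y)

instance subsingleton_setoid [Subsingleton α] : Subsingleton (Setoid α) where
  allEq p q := Setoid.ext fun x y => by
    rw [Subsingleton.elim x y]
    exact iff_of_true (p.refl y) (q.refl y)

end Setoid

section Noncrossing

variable {m n : ℕ}

namespace IsNoncrossing

lemma rel_of_lt_of_lt_of_lt {p : Setoid (Fin n)} (hp : IsNoncrossing p) {i j k l : Fin n}
    (hij : i < j) (hjk : j < k) (hkl : k < l) (hik : p i k) (hjl : p j l) : p i j :=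
  by_contra fun hne => hp ⟨i, j, k, l, hij, hjk, hkl, hik, hjl, hne⟩

lemma of_subsingleton [Subsingleton (Fin n)] (p : Setoid (Fin n)) : IsNoncrossing p :=
  fun ⟨i, j, _, _, hij, _⟩ => hij.ne (Subsingleton.elim i j)

lemma comap {p : Setoid (Fin n)} (hp : IsNoncrossing p) {f : Fin m → Fin n} (hf : StrictMono f) :
    IsNoncrossing (p.comap f) :=
  fun ⟨_, _, _, _, hij, hjk, hkl, h⟩ => hp ⟨_, _, _, _, hf hij, hf hjk, hf hkl, h⟩

end IsNoncrossing

/-- The juxtaposition of a partition of `Fin m` and a partition of `Fin n`, as a partition of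
`Fin (m + n)`: points of different summands are never related. -/
def juxtapose (p : Setoid (Fin m)) (q : Setoid (Fin n)) : Setoid (Fin (m + n)) :=
  Setoid.ker (Sum.map (Quotient.mk p) (Quotient.mk q) ∘ finSumFinEquiv.symm)

section Juxtapose

variable (p : Setoid (Fin m)) (q : Setoid (Fin n))

lemma juxtapose_iff (x y : Fin (m + n)) :
    juxtapose p q x y ↔ Sum.map (Quotient.mk p) (Quotient.mk q) (finSumFinEquiv.symm x) =
      Sum.map (Quotient.mk p) (Quotient.mk q) (finSumFinEquiv.symm y) :=
  Iff.rfl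

@[simp]
lemma juxtapose_castAdd_castAdd (i j : Fin m) :
    juxtapose p q (Fin.castAdd n i) (Fin.castAdd n j) ↔ p i j := by
  simp [juxtapose_iff, Quotient.eq]

@[simp]
lemma juxtapose_natAdd_natAdd (i j : Fin n) :
    juxtapose p q (Fin.natAdd m i) (Fin.natAdd m j) ↔ q i j := by
  simp [juxtapose_iff, Quotient.eq]

@[simp]
lemma not_juxtapose_castAdd_natAdd (i : Fin m) (j : Fin n) :
    ¬ juxtapose p q (Fin.castAdd n i) (Fin.natAdd m j) := by
  simp [juxtapose_iff]

@[simp]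
lemma not_juxtapose_natAdd_castAdd (i : Fin n) (j : Fin m) :
    ¬ juxtapose p q (Fin.natAdd m i) (Fin.castAdd n j) := by
  simp [juxtapose_iff]

lemma comap_castAdd_juxtapose : (juxtapose p q).comap (Fin.castAdd n) = p :=
  Setoid.ext fun i j => juxtapose_castAdd_castAdd p q i j

lemma comap_natAdd_juxtapose : (juxtapose p q).comap (Fin.natAdd m) = q :=
  Setoid.ext fun i j => juxtapose_natAdd_natAdd p q i j

lemma juxtapose_comap {r : Setoid (Fin (m + n))}
    (hr : ∀ i j, ¬ r (Fin.castAdd n i) (Fin.natAdd m j)) :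
    juxtapose (r.comap (Fin.castAdd n)) (r.comap (Fin.natAdd m)) = r := by
  ext x y
  have hr' : ∀ i j, ¬ r (Fin.natAdd m j) (Fin.castAdd n i) := fun i j h => hr i j (r.symm h)
  induction x using Fin.addCases <;> induction y using Fin.addCases <;>
    simp [Setoid.comap_rel, hr, hr']

lemma ncard_classes_juxtapose :
    (juxtapose p q).classes.ncard = p.classes.ncard + q.classes.ncard := by
  have hsurj : Function.Surjective (Sum.map (Quotient.mk p) (Quotient.mk q)) :=
    Sum.map_surjective.2 ⟨Quotient.mk_surjective, Quotient.mk_surjective⟩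
  rw [juxtapose, ncard_classes_ker_of_surjective (hsurj.comp finSumFinEquiv.symm.surjective),
    Nat.card_sum, ncard_classes_eq_card_quotient, ncard_classes_eq_card_quotient]

variable {p q}

lemma exists_of_juxtapose {x y : Fin (m + n)} (h : juxtapose p q x y) :
    (∃ i j, x = Fin.castAdd n i ∧ y = Fin.castAdd n j ∧ p i j) ∨
      ∃ i j, x = Fin.natAdd m i ∧ y = Fin.natAdd m j ∧ q i j := by
  induction x using Fin.addCases with
  | left i =>
    induction y using Fin.addCases with
    | left j => exact .inl ⟨i, j, rfl, rfl, (juxtapose_castAdd_castAdd p q i j).1 h⟩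
    | right j => exact absurd h (not_juxtapose_castAdd_natAdd p q i j)
  | right i =>
    induction y using Fin.addCases with
    | left j => exact absurd h (not_juxtapose_natAdd_castAdd p q i j)
    | right j => exact .inr ⟨i, j, rfl, rfl, (juxtapose_natAdd_natAdd p q i j).1 h⟩

lemma IsNoncrossing.juxtapose (hp : IsNoncrossing p) (hq : IsNoncrossing q) :
    IsNoncrossing (juxtapose p q) := by
  have hlr : ∀ (i : Fin m) (j : Fin n), ¬ Fin.natAdd m j < Fin.castAdd n i := fun i j => by
    simp only [Fin.lt_def, Fin.val_natAdd, Fin.val_castAdd]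
    lia
  rintro ⟨_, _, _, _, hij, hjk, hkl, hik, hjl, hne⟩
  rcases exists_of_juxtapose hik with ⟨i, k, rfl, rfl, hik'⟩ | ⟨i, k, rfl, rfl, hik'⟩ <;>
    rcases exists_of_juxtapose hjl with ⟨j, l, rfl, rfl, hjl'⟩ | ⟨j, l, rfl, rfl, hjl'⟩
  · exact hne <| (juxtapose_castAdd_castAdd p q i j).2 <|
      hp.rel_of_lt_of_lt_of_lt hij hjk hkl hik' hjl'
  · exact hlr _ _ hjk
  · exact hlr _ _ hij
  · simp only [Fin.natAdd_lt_natAdd_iff] at hij hjk hkl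
    exact hne <| (juxtapose_natAdd_natAdd p q i j).2 <|
      hq.rel_of_lt_of_lt_of_lt hij hjk hkl hik' hjl'

end Juxtapose

/-- The block of the last point of `Fin (m + (n + 1))` has `m` as its smallest element. -/
def LastBlockStartsAt (m n : ℕ) (r : Setoid (Fin (m + (n + 1)))) : Prop :=
  r (Fin.natAdd m 0) (Fin.natAdd m (Fin.last n)) ∧
    ∀ i, ¬ r (Fin.castAdd (n + 1) i) (Fin.natAdd m (Fin.last n))

lemma IsNoncrossing.not_rel_castAdd_natAdd {r : Setoid (Fin (m + (n + 1)))} (hr : IsNoncrossing r)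
    (hstart : LastBlockStartsAt m n r) (i : Fin m) (j : Fin (n + 1)) :
    ¬ r (Fin.castAdd (n + 1) i) (Fin.natAdd m j) := by
  obtain ⟨hstart, hbefore⟩ := hstart
  intro hij
  rcases eq_or_ne j 0 with rfl | hj0
  · exact hbefore i (r.trans hij hstart)
  rcases eq_or_ne j (Fin.last n) with rfl | hjlast
  · exact hbefore i hij
  have hi0 : r (Fin.castAdd (n + 1) i) (Fin.natAdd m 0) :=
    hr.rel_of_lt_of_lt_of_lt (by simp [Fin.lt_def]) (by simpa using Fin.pos_iff_ne_zero.2 hj0)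
      (by simpa [-Fin.natAdd_last] using Fin.lt_last_iff_ne_last.2 hjlast) hij hstart
  exact hbefore i (r.trans hi0 hstart)

open scoped Classical in
/-- The smallest element of the block of the last element of `Fin (N + 1)`. -/
noncomputable def lastBlockStart {N : ℕ} (p : Setoid (Fin (N + 1))) : Fin (N + 1) :=
  (univ.filter fun i => p i (Fin.last N)).min' (filter_nonempty_iff.2 ⟨Fin.last N, by simp⟩)

lemma lastBlockStart_eq_iff {N : ℕ} {p : Setoid (Fin (N + 1))} {c : Fin (N + 1)} :
    lastBlockStart p = c ↔ p c (Fin.last N) ∧ ∀ i < c, ¬ p i (Fin.last N) := by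
  rw [lastBlockStart, min'_eq_iff]
  simp only [mem_filter_univ]
  exact and_congr_right' <| forall_congr' fun i => by rw [← not_lt, imp_not_comm]

lemma val_lastBlockStart_eq_iff {p : Setoid (Fin (m + (n + 1)))} :
    (lastBlockStart (N := m + n) p : ℕ) = m ↔ LastBlockStartsAt m n p := by
  change (lastBlockStart (N := m + n) p : ℕ) = (Fin.natAdd m (0 : Fin (n + 1)) : ℕ) ↔ _
  rw [← Fin.ext_iff, lastBlockStart_eq_iff]
  refine and_congr_right'
    ⟨fun h i => h _ (by simp [Fin.lt_def]), fun h (x : Fin (m + (n + 1))) hx => ?_⟩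
  induction x using Fin.addCases with
  | left i => exact h i
  | right j => simp at hx

/-- The partition of `Fin (n + 2)` obtained from one of `Fin (n + 1)` by adding the last point to
the block of `0`. -/
def insertLast (p : Setoid (Fin (n + 1))) : Setoid (Fin (n + 2)) :=
  p.comap (Fin.lastCases 0 id)

section InsertLast

variable (p : Setoid (Fin (n + 1)))

lemma insertLast_iff (x y : Fin (n + 2)) :
    insertLast p x y ↔ p (Fin.lastCases 0 id x) (Fin.lastCases 0 id y) :=
  Iff.rfl

lemma insertLast_zero_last : insertLast p 0 (Fin.last (n + 1)) := by
  have hzero : Fin.lastCases 0 id (0 : Fin (n + 2)) = (0 : Fin (n + 1)) :=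
    Fin.lastCases_castSucc 0
  rw [insertLast_iff, hzero, Fin.lastCases_last]

lemma comap_castSucc_insertLast : (insertLast p).comap Fin.castSucc = p := by
  ext x y
  simp [Setoid.comap_rel, insertLast_iff]

lemma insertLast_comap_castSucc {r : Setoid (Fin (n + 2))} (hr : r 0 (Fin.last (n + 1))) :
    insertLast (r.comap Fin.castSucc) = r := by
  have hcast : ∀ x, r (Fin.castSucc (Fin.lastCases 0 id x)) x := fun x => by
    induction x using Fin.lastCases with
    | last => simpa using hr
    | cast i => simp
  ext x y
  exact ⟨fun h => r.trans (r.symm (hcast x)) (r.trans h (hcast y)),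
    fun h => r.trans (hcast x) (r.trans h (r.symm (hcast y)))⟩

lemma ncard_classes_insertLast : (insertLast p).classes.ncard = p.classes.ncard :=
  ncard_classes_comap_of_surjective (fun i => ⟨Fin.castSucc i, by simp⟩) p

variable {p} in
lemma IsNoncrossing.insertLast (hp : IsNoncrossing p) : IsNoncrossing (insertLast p) := by
  rintro ⟨i, j, k, l, hij, hjk, hkl, hik, hjl, hne⟩
  change _root_.insertLast p i k at hik
  change _root_.insertLast p j l at hjl
  change ¬ _root_.insertLast p i j at hne
  obtain ⟨i, rfl⟩ := Fin.exists_castSucc_eq.2 (hij.trans (hjk.trans hkl)).ne_top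
  obtain ⟨j, rfl⟩ := Fin.exists_castSucc_eq.2 (hjk.trans hkl).ne_top
  obtain ⟨k, rfl⟩ := Fin.exists_castSucc_eq.2 hkl.ne_top
  induction l using Fin.lastCases with
  | cast l =>
    simp only [insertLast_iff, Fin.lastCases_castSucc, id_eq, Fin.castSucc_lt_castSucc_iff] at *
    exact hne (hp.rel_of_lt_of_lt_of_lt hij hjk hkl hik hjl)
  | last =>
    simp only [insertLast_iff, Fin.lastCases_castSucc, Fin.lastCases_last, id_eq,
      Fin.castSucc_lt_castSucc_iff] at *
    rcases eq_or_ne i 0 with rfl | hi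
    · exact hne (p.symm hjl)
    · have h0i : p 0 i :=
        hp.rel_of_lt_of_lt_of_lt (Fin.pos_iff_ne_zero.2 hi) hij hjk (p.symm hjl) hik
      exact hne (p.symm (p.trans hjl h0i))

end InsertLast

/-- The finite set of noncrossing partitions of `Fin n`. -/
noncomputable def noncrossingPartitions (n : ℕ) : Finset (Setoid (Fin n)) :=
  (Set.toFinite {p | IsNoncrossing p}).toFinset

@[simp]
lemma mem_noncrossingPartitions {p : Setoid (Fin n)} :
    p ∈ noncrossingPartitions n ↔ IsNoncrossing p := by
  simp [noncrossingPartitions]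

section BlockSum

variable {R : Type*} [CommSemiring R] (κ : R)

/-- The sum of `κ ^ #blocks` over all noncrossing partitions of `Fin n`, that is, the `n`-th
Narayana polynomial evaluated at `κ`. -/
noncomputable def narayanaSum (n : ℕ) : R :=
  ∑ p ∈ noncrossingPartitions n, κ ^ p.classes.ncard

open scoped Classical in
/-- The part of `narayanaSum κ (n + 1)` coming from those noncrossing partitions of `Fin (n + 1)`
that have the first and the last point in one block. -/
noncomputable def closedNarayanaSum (n : ℕ) : R :=
  ∑ p ∈ noncrossingPartitions (n + 1) with p 0 (Fin.last n), κ ^ p.classes.ncard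

lemma noncrossingPartitions_eq_singleton_bot [Subsingleton (Fin n)] :
    noncrossingPartitions n = {⊥} :=
  Finset.eq_singleton_iff_unique_mem.2
    ⟨mem_noncrossingPartitions.2 (.of_subsingleton _), fun _ _ => Subsingleton.elim _ _⟩

@[simp]
lemma narayanaSum_zero : narayanaSum κ 0 = 1 := by
  simp [narayanaSum, noncrossingPartitions_eq_singleton_bot, ncard_classes_eq_card_quotient]

lemma closedNarayanaSum_zero : closedNarayanaSum κ 0 = κ := by
  have : (⊥ : Setoid (Fin 1)).classes.ncard = 1 := by
    simpa using ncard_classes_mem_Icc (⊥ : Setoid (Fin 1))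
  simp [closedNarayanaSum, noncrossingPartitions_eq_singleton_bot, this]

lemma closedNarayanaSum_succ : closedNarayanaSum κ (n + 1) = narayanaSum κ (n + 1) := by
  refine sum_nbij' (·.comap Fin.castSucc) insertLast ?_ ?_ ?_ ?_ ?_
  all_goals simp only [mem_filter, mem_noncrossingPartitions]
  · exact fun p hp => hp.1.comap Fin.strictMono_castSucc
  · exact fun p hp => ⟨hp.insertLast, insertLast_zero_last p⟩
  · exact fun p hp => insertLast_comap_castSucc hp.2
  · exact fun p _ => comap_castSucc_insertLast p
  · intro p hp
    rw [← ncard_classes_insertLast (p.comap Fin.castSucc), insertLast_comap_castSucc hp.2]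

open scoped Classical in
lemma sum_lastBlockStartsAt (m n : ℕ) :
    ∑ r ∈ noncrossingPartitions (m + (n + 1)) with LastBlockStartsAt m n r,
      κ ^ r.classes.ncard = narayanaSum κ m * closedNarayanaSum κ n := by
  rw [narayanaSum, closedNarayanaSum, sum_mul_sum, ← sum_product']
  refine sum_nbij' (fun r => (r.comap (Fin.castAdd (n + 1)), r.comap (Fin.natAdd m)))
    (fun pq => juxtapose pq.1 pq.2) ?_ ?_ ?_ ?_ ?_
  all_goals
    simp only [mem_filter, mem_product, mem_noncrossingPartitions]
  · rintro r ⟨hr, hstart⟩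
    exact ⟨hr.comap (Fin.strictMono_castAdd _), hr.comap (Fin.strictMono_natAdd _), hstart.1⟩
  · rintro ⟨p, q⟩ ⟨hp, hq, hclosed⟩
    exact ⟨hp.juxtapose hq, (juxtapose_natAdd_natAdd p q _ _).2 hclosed,
      fun i => not_juxtapose_castAdd_natAdd p q i _⟩
  · rintro r ⟨hr, hstart⟩
    exact juxtapose_comap (hr.not_rel_castAdd_natAdd hstart)
  · rintro ⟨p, q⟩ -
    rw [comap_castAdd_juxtapose, comap_natAdd_juxtapose]
  · rintro r ⟨hr, hstart⟩
    rw [← pow_add, ← ncard_classes_juxtapose,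
      juxtapose_comap (hr.not_rel_castAdd_natAdd hstart)]

open scoped Classical in
lemma narayanaSum_succ (N : ℕ) :
    narayanaSum κ (N + 1) =
      ∑ mn ∈ antidiagonal N, narayanaSum κ mn.1 * closedNarayanaSum κ mn.2 := by
  have hmaps : ∀ p ∈ noncrossingPartitions (N + 1),
      ((lastBlockStart p : ℕ), N - lastBlockStart p) ∈ antidiagonal N := fun p _ => by
    simpa using Nat.add_sub_of_le (lastBlockStart p).is_le
  rw [narayanaSum, ← sum_fiberwise_of_maps_to hmaps]
  refine sum_congr rfl fun ⟨m, n⟩ hmn => ?_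
  obtain rfl := mem_antidiagonal.1 hmn
  rw [← sum_lastBlockStartsAt]
  refine sum_congr (filter_congr fun p _ => ?_) fun _ _ => rfl
  rw [← val_lastBlockStart_eq_iff, Prod.mk.injEq]
  lia

lemma sum_card_mul_pow_eq_narayanaSum {k : ℕ} (hk : 1 ≤ k) :
    ∑ i ∈ Icc 1 k,
      (Nat.card {q : Setoid (Fin k) // IsNoncrossing q ∧ q.classes.ncard = i} : R) * κ ^ i =
    narayanaSum κ k := by
  have : Nonempty (Fin k) := ⟨0, hk⟩
  have hmaps : ∀ p ∈ noncrossingPartitions k, p.classes.ncard ∈ Icc 1 k := fun p _ => by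
    simpa only [Nat.card_fin] using ncard_classes_mem_Icc p
  rw [narayanaSum, ← sum_fiberwise_of_maps_to hmaps]
  refine sum_congr rfl fun i _ => ?_
  rw [sum_congr rfl (g := fun _ => κ ^ i) fun p hp => by rw [(mem_filter.1 hp).2], sum_const,
    nsmul_eq_mul, Nat.subtype_card (filter (·.classes.ncard = i) (noncrossingPartitions k))]
  simp only [mem_filter, mem_noncrossingPartitions, implies_true]

end BlockSum

end Noncrossing

end Combinatorics

section GeneratingFunction

open PowerSeries

variable {R : Type*}

/-- The ordinary generating function of the sums `narayanaSum κ n`. -/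
noncomputable def narayanaSeries [CommSemiring R] (κ : R) : R⟦X⟧ :=
  mk (narayanaSum κ)

variable [CommRing R]

lemma narayanaSeries_eq (κ : R) :
    narayanaSeries κ = 1 + X * (narayanaSeries κ * (narayanaSeries κ - 1 + C κ)) := by
  have hclosed : narayanaSeries κ - 1 + C κ = mk (closedNarayanaSum κ) := by
    ext (_ | n) <;>
      simp [narayanaSeries, coeff_one, closedNarayanaSum_zero, closedNarayanaSum_succ]
  rw [hclosed]
  ext (_ | n)
  · simp [narayanaSeries]
  · rw [map_add, coeff_succ_X_mul, coeff_mul]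
    simp [narayanaSeries, coeff_one, narayanaSum_succ]

lemma sq_eq_quadratic_of_eq_one_add_X_mul {κ : R} {M : R⟦X⟧}
    (hM : M = 1 + X * (M * (M - 1 + C κ))) :
    (2 * (X * M) + C (κ - 1) * X - 1) ^ 2 =
      1 - C (2 * (1 + κ)) * X + C ((1 - κ) ^ 2) * X ^ 2 := by
  simp only [map_sub, map_add, map_mul, map_pow, map_one, map_ofNat]
  linear_combination (-4 * X) * hM

lemma derivative_quadratic (p q : R) :
    d⁄dX R (1 - C (2 * p) * X + C q * X ^ 2) = 2 * (C q * X - C p) := by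
  simp only [map_add, map_sub, Derivation.leibniz, Derivation.leibniz_pow,
    Derivation.map_one_eq_zero, derivative_C, derivative_X, smul_eq_mul, nsmul_eq_mul]
  simp only [map_mul, map_ofNat]
  push_cast
  ring

section Domain

variable [NoZeroDivisors R] [CharZero R]

lemma quadratic_mul_derivative_of_sq_eq {p q : R} {S : R⟦X⟧}
    (hS : S ^ 2 = 1 - C (2 * p) * X + C q * X ^ 2) :
    (1 - C (2 * p) * X + C q * X ^ 2) * d⁄dX R S = (C q * X - C p) * S := by
  have htwo : (2 : R⟦X⟧) ≠ 0 := by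
    rw [← map_ofNat (C (R := R)) 2]
    exact (map_ne_zero_iff _ C_injective).2 two_ne_zero
  have hderiv : S * d⁄dX R S = C q * X - C p := by
    refine mul_left_cancel₀ htwo ?_
    rw [← derivative_quadratic, ← hS, Derivation.leibniz_pow]
    simp
  rw [← hS, ← hderiv]
  ring

lemma coeff_recurrence_of_sq_eq {p q : R} {S : R⟦X⟧}
    (hS : S ^ 2 = 1 - C (2 * p) * X + C q * X ^ 2) (n : ℕ) :
    (n + 2) * coeff (n + 2) S = (2 * n + 1) * p * coeff (n + 1) S - (n - 1) * q * coeff n S := by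
  have hode : d⁄dX R S - C (2 * p) * (X * d⁄dX R S) + C q * (X * (X * d⁄dX R S)) =
      C q * (X * S) - C p * S := by
    linear_combination quadratic_mul_derivative_of_sq_eq hS
  have hcoeff := congrArg (coeff (n + 1)) hode
  rcases n with _ | n <;>
  · simp only [map_add, map_sub, coeff_C_mul, coeff_succ_X_mul, coeff_zero_X_mul,
      coeff_derivative] at hcoeff
    push_cast at hcoeff ⊢
    linear_combination hcoeff

lemma narayanaSum_recurrence (κ : R) (j : ℕ) :
    (j + 3) * narayanaSum κ (j + 2) =
      (2 * j + 3) * (1 + κ) * narayanaSum κ (j + 1) - j * (1 - κ) ^ 2 * narayanaSum κ j := by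
  have hcoeff : ∀ n, coeff (n + 2) (2 * (X * narayanaSeries κ) + C (κ - 1) * X - 1) =
      2 * narayanaSum κ (n + 1) := fun n => by
    rw [← map_ofNat (C (R := R)) 2]
    simp [narayanaSeries, coeff_succ_X_mul, coeff_succ_mul_X, coeff_one]
  have hrec := coeff_recurrence_of_sq_eq
    (sq_eq_quadratic_of_eq_one_add_X_mul (narayanaSeries_eq κ)) (j + 1)
  refine mul_left_cancel₀ (two_ne_zero (α := R)) ?_
  rcases j with _ | j <;>
  · simp only [hcoeff] at hrec
    push_cast at hrec ⊢
    linear_combination hrec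

end Domain

end GeneratingFunction

section Semicircle

open Real

/-- The `j`-th moment of the unnormalised semicircle density `√(r ^ 2 - (x - c) ^ 2)` of centre `c`
and radius `r`. -/
noncomputable def semicircleMoment (c r : ℝ) (j : ℕ) : ℝ :=
  ∫ x in (c - r)..(c + r), x ^ j * √(r ^ 2 - (x - c) ^ 2)

lemma hasDerivAt_pow_mul_semicircle_cube {c r x : ℝ} (hx : 0 < r ^ 2 - (x - c) ^ 2) (j : ℕ) :
    HasDerivAt (fun x => x ^ j * √(r ^ 2 - (x - c) ^ 2) ^ 3)
      ((2 * j + 3) * c * (x ^ j * √(r ^ 2 - (x - c) ^ 2))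
        - j * (c ^ 2 - r ^ 2) * (x ^ (j - 1) * √(r ^ 2 - (x - c) ^ 2))
        - (j + 3) * (x ^ (j + 1) * √(r ^ 2 - (x - c) ^ 2))) x := by
  have hquad : HasDerivAt (fun x => r ^ 2 - (x - c) ^ 2) (-(2 * (x - c))) x := by
    simpa using (((hasDerivAt_id x).sub_const c).pow 2).const_sub (r ^ 2)
  have hsqrt : √(r ^ 2 - (x - c) ^ 2) ≠ 0 := (sqrt_pos.2 hx).ne'
  have hcube : HasDerivAt (fun x => √(r ^ 2 - (x - c) ^ 2) ^ 3)
      (-3 * (x - c) * √(r ^ 2 - (x - c) ^ 2)) x := by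
    refine ((hquad.sqrt hx.ne').fun_pow 3).congr_deriv ?_
    field_simp
    ring
  refine ((hasDerivAt_pow j x).fun_mul hcube).congr_deriv ?_
  have hpow : j * x ^ (j - 1) * x = j * x ^ j := by
    rcases j with _ | j
    · simp
    · rw [Nat.add_sub_cancel, mul_assoc, ← pow_succ]
  linear_combination j * x ^ (j - 1) * √(r ^ 2 - (x - c) ^ 2) * sq_sqrt hx.le +
    (2 * c - x) * √(r ^ 2 - (x - c) ^ 2) * hpow

lemma semicircleMoment_recurrence (c : ℝ) {r : ℝ} (hr : 0 ≤ r) (j : ℕ) :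
    (j + 3) * semicircleMoment c r (j + 1) =
      (2 * j + 3) * c * semicircleMoment c r j
        - j * (c ^ 2 - r ^ 2) * semicircleMoment c r (j - 1) := by
  have hint : ∀ (a : ℝ) (i : ℕ), IntervalIntegrable
      (fun x => a * (x ^ i * √(r ^ 2 - (x - c) ^ 2))) volume (c - r) (c + r) := fun a i =>
    Continuous.intervalIntegrable (by fun_prop) _ _
  have hFTC := intervalIntegral.integral_eq_sub_of_hasDerivAt_of_le (by linarith)
    (by fun_prop) (fun x (hx : x ∈ Set.Ioo (c - r) (c + r)) =>
      hasDerivAt_pow_mul_semicircle_cube (by nlinarith [hx.1, hx.2]) j)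
    (((hint _ _).sub (hint _ _)).sub (hint _ _))
  rw [intervalIntegral.integral_sub ((hint _ _).sub (hint _ _)) (hint _ _),
    intervalIntegral.integral_sub (hint _ _) (hint _ _)] at hFTC
  simp only [intervalIntegral.integral_const_mul, add_sub_cancel_left, sub_sub_cancel_left, neg_sq,
    sub_self, sqrt_zero, ne_eq, OfNat.ofNat_ne_zero, not_false_eq_true, zero_pow,
    mul_zero] at hFTC
  exact (sub_eq_zero.1 hFTC).symm

lemma semicircleMoment_zero (c : ℝ) {r : ℝ} (hr : 0 ≤ r) :
    semicircleMoment c r 0 = π * r ^ 2 / 2 := by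
  have hscale : ∀ x : ℝ, √(r ^ 2 - (r * x + c - c) ^ 2) = r * √(1 - x ^ 2) := fun x => by
    rw [show r ^ 2 - (r * x + c - c) ^ 2 = r ^ 2 * (1 - x ^ 2) by ring,
      sqrt_mul (sq_nonneg r), sqrt_sq hr]
  have hsubst := intervalIntegral.mul_integral_comp_mul_add (a := -1) (b := 1)
    (f := fun x => √(r ^ 2 - (x - c) ^ 2)) r c
  simp only [hscale, intervalIntegral.integral_const_mul, integral_sqrt_one_sub_sq] at hsubst
  rw [semicircleMoment, show c - r = r * -1 + c by ring, show c + r = r * 1 + c by ring]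
  simp only [pow_zero, one_mul, ← hsubst]
  ring

lemma eq_of_three_term_recurrence {K : Type*} [Field K] [CharZero K] {a b : K} {u v : ℕ → K}
    (hu : ∀ j : ℕ, (j + 3) * u (j + 1) = (2 * j + 3) * a * u j - j * b * u (j - 1))
    (hv : ∀ j : ℕ, (j + 3) * v (j + 1) = (2 * j + 3) * a * v j - j * b * v (j - 1))
    (h0 : u 0 = v 0) : u = v := by
  funext n
  induction n using Nat.strong_induction_on with
  | _ n ih =>
    rcases n with _ | n
    · exact h0
    · have hne : (n + 3 : K) ≠ 0 := mod_cast (n + 2).succ_ne_zero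
      refine mul_left_cancel₀ hne ?_
      rw [hu, hv, ih n (by lia), ih (n - 1) (by lia)]

lemma sq_two_mul_sqrt {κ : ℝ} (hκ : 0 ≤ κ) : (2 * √κ) ^ 2 = 4 * κ := by
  rw [mul_pow, sq_sqrt hκ]
  norm_num

lemma semicircleMoment_eq_narayanaSum {κ : ℝ} (hκ : 0 ≤ κ) (n : ℕ) :
    semicircleMoment (1 + κ) (2 * √κ) n = 2 * π * narayanaSum κ (n + 1) := by
  refine congrFun (eq_of_three_term_recurrence (a := 1 + κ) (b := (1 - κ) ^ 2)
    (v := fun n => 2 * π * narayanaSum κ (n + 1)) ?_ ?_ ?_) n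
  · intro j
    rw [semicircleMoment_recurrence _ (by positivity), sq_two_mul_sqrt hκ]
    ring
  · rintro (_ | j)
    · linear_combination 2 * π * narayanaSum_recurrence κ 0
    · rw [Nat.add_sub_cancel]
      linear_combination 2 * π * narayanaSum_recurrence κ (j + 1)
  · rw [semicircleMoment_zero _ (by positivity), sq_two_mul_sqrt hκ, narayanaSum_succ]
    simp only [Finset.Nat.antidiagonal_zero, Finset.sum_singleton, narayanaSum_zero,
      closedNarayanaSum_zero]
    ring

end Semicircle

section MarchenkoPastur

open Real

variable (κ : ℝ)

lemma sq_one_sub_sqrt_le_sq_one_add_sqrt : (1 - √κ) ^ 2 ≤ (1 + √κ) ^ 2 := by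
  nlinarith [sqrt_nonneg κ]

/-- The density of the absolutely continuous part of `mpMeasure κ`. -/
noncomputable def mpDensity : ℝ → ℝ :=
  Set.indicator (Set.Icc ((1 - √κ) ^ 2) ((1 + √κ) ^ 2))
    fun y => √(4 * κ - (y - 1 - κ) ^ 2) / (2 * π * y)

lemma mpMeasure_eq_add_withDensity_mpDensity :
    mpMeasure κ = ENNReal.ofReal (max 0 (1 - κ)) • Measure.dirac 0 +
      volume.withDensity fun x => ENNReal.ofReal (mpDensity κ x) :=
  rfl

@[fun_prop]
lemma measurable_mpDensity : Measurable (mpDensity κ) :=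
  Measurable.indicator (by fun_prop) measurableSet_Icc

lemma mpDensity_nonneg (x : ℝ) : 0 ≤ mpDensity κ x := by
  refine Set.indicator_nonneg (fun y hy => ?_) x
  have : 0 ≤ y := (sq_nonneg _).trans hy.1
  positivity

lemma mpDensity_smul_id_mul_ae_eq (g : ℝ → ℝ) :
    (fun x => (ENNReal.ofReal (mpDensity κ x)).toReal • (x * g x)) =ᵐ[volume]
      Set.indicator (Set.Icc ((1 - √κ) ^ 2) ((1 + √κ) ^ 2))
        fun x => (2 * π)⁻¹ * (g x * √(4 * κ - (x - 1 - κ) ^ 2)) := by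
  filter_upwards [Measure.ae_ne volume 0] with x hx
  rw [ENNReal.toReal_ofReal (mpDensity_nonneg κ x), smul_eq_mul, mpDensity]
  simp only [Set.indicator_apply]
  split_ifs
  · field_simp
  · exact zero_mul _

lemma integrable_id_mul_withDensity_mpDensity {g : ℝ → ℝ} (hg : Continuous g) :
    Integrable (fun x => x * g x) (volume.withDensity fun x => ENNReal.ofReal (mpDensity κ x)) := by
  rw [integrable_withDensity_iff_integrable_smul' (by fun_prop) (by simp),
    integrable_congr (mpDensity_smul_id_mul_ae_eq κ g), integrable_indicator_iff measurableSet_Icc]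
  exact Continuous.integrableOn_Icc (by fun_prop)

lemma integral_id_mul_mpMeasure {g : ℝ → ℝ} (hg : Continuous g) :
    ∫ x, x * g x ∂mpMeasure κ =
      (2 * π)⁻¹ * ∫ x in ((1 - √κ) ^ 2)..((1 + √κ) ^ 2), g x * √(4 * κ - (x - 1 - κ) ^ 2) := by
  have hatom : Integrable (fun x => x * g x)
      (ENNReal.ofReal (max 0 (1 - κ)) • Measure.dirac (0 : ℝ)) :=
    (integrable_dirac (by simp)).smul_measure ENNReal.ofReal_ne_top
  rw [mpMeasure_eq_add_withDensity_mpDensity,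
    integral_add_measure hatom (integrable_id_mul_withDensity_mpDensity κ hg),
    integral_smul_measure, integral_dirac, zero_mul, smul_zero, zero_add,
    integral_withDensity_eq_integral_toReal_smul (by fun_prop) (by simp),
    integral_congr_ae (mpDensity_smul_id_mul_ae_eq κ g), integral_indicator measurableSet_Icc,
    integral_Icc_eq_integral_Ioc,
    ← intervalIntegral.integral_of_le (sq_one_sub_sqrt_le_sq_one_add_sqrt κ),
    intervalIntegral.integral_const_mul]

variable {κ} in
lemma integral_pow_succ_mpMeasure (hκ : 0 ≤ κ) (n : ℕ) :
    ∫ x, x ^ (n + 1) ∂mpMeasure κ = (2 * π)⁻¹ * semicircleMoment (1 + κ) (2 * √κ) n := by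
  have hleft : (1 - √κ) ^ 2 = 1 + κ - 2 * √κ := by linear_combination sq_sqrt hκ
  have hright : (1 + √κ) ^ 2 = 1 + κ + 2 * √κ := by linear_combination sq_sqrt hκ
  simp only [pow_succ', integral_id_mul_mpMeasure κ (continuous_pow n), semicircleMoment, hleft,
    hright, sq_two_mul_sqrt hκ, sub_sub]

end MarchenkoPastur

/-- `m_k = ∑_{i=1}^{k} #NC^{(i)}(k)·κ^i` is the `k`-th moment of the Marčenko–Pastur
distribution with parameter `κ`. -/
theorem mp_moments (κ : ℝ) (hκ : 0 < κ) (k : ℕ) (hk : 1 ≤ k) :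
    ∫ x, x ^ k ∂(mpMeasure κ)
      = ∑ i ∈ Finset.Icc 1 k,
          (Nat.card {q : Setoid (Fin k) // IsNoncrossing q ∧ q.classes.ncard = i} : ℝ)
            * κ ^ i := by
  rw [sum_card_mul_pow_eq_narayanaSum κ hk]
  obtain ⟨n, rfl⟩ := Nat.exists_eq_add_of_le' hk
  rw [integral_pow_succ_mpMeasure hκ.le, semicircleMoment_eq_narayanaSum hκ.le]
  exact inv_mul_cancel_left₀ Real.two_pi_pos.ne' _
end
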